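/- Let $\Delta$ be a pure $(d-1)$-dimensional finite simplicial complex and let $0 \leq k \leq \lfloor (d-1)/2 \rfloor$. Then $\sum_{v \in V(\Delta)} g_k(\mathrm{lk}(v)) = (k+1) g_{k+1}(\Delta) + (d+1-k) g_k(\Delta)$. -/

import Mathlib

/-!
Counting pairs `(v, τ)` with `v ∈ τ ∈ Δ` gives
`∑_v f_{i-1}(lk v) = (i+1) f_i(Δ)`, because `σ ↦ σ ∪ {v}` matches the faces of the link of `v`
with the faces of `Δ` through `v` (`sum_fNum_lk`). Substituting into the expansion of the
`h`-numbers and comparing coefficients of each `f_{m-1}(Δ)`, the absorption identity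
`(r+1) C(n, r+1) = (n-r) C(n, r)` yields
`∑_v h_j(lk v) = (j+1) h_{j+1}(Δ) + (d-j) h_j(Δ)` (`sum_hNum_lk`).
Subtracting the cases `j = k` and `j = k - 1` gives the formula for the `g`-numbers.
-/

open Finset

variable {V : Type*} [Fintype V] [DecidableEq V]

/-- `fNum Δ i` is the number of faces of `Δ` of cardinality `i`, i.e. the number of
`(i-1)`-dimensional faces `f_{i-1}(Δ)`. -/
def fNum (Δ : Finset (Finset V)) (i : ℕ) : ℤ := ((Δ.filter fun σ => σ.card = i).card : ℤ)

/-- The `h`-numbers of a `(d-1)`-dimensional complex, via the standard expansion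
`h_j = ∑_{i=0}^{j} (-1)^{j-i} C(d-i, j-i) f_{i-1}` of the defining identity
`∑ f_{i-1}(t-1)^{d-i} = ∑ h_i t^{d-i}`. -/
def hNum (Δ : Finset (Finset V)) (d j : ℕ) : ℤ :=
  ∑ i ∈ Finset.range (j + 1), (-1 : ℤ) ^ (j - i) * (Nat.choose (d - i) (j - i) : ℤ) * fNum Δ i

/-- The `g`-numbers: `g_j = h_j - h_{j-1}`, with `h_{-1} = 0`. -/
def gNum (Δ : Finset (Finset V)) (d j : ℕ) : ℤ :=
  hNum Δ d j - (if j = 0 then 0 else hNum Δ d (j - 1))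

/-- The link of a vertex `v`: faces `σ ∈ Δ` with `v ∉ σ` and `σ ∪ {v} ∈ Δ`. -/
def lk (Δ : Finset (Finset V)) (v : V) : Finset (Finset V) :=
  Δ.filter fun σ => v ∉ σ ∧ insert v σ ∈ Δ

/-- The faces of the link of `v` with `i` elements correspond, by inserting `v`, to the faces of
`Δ` with `i + 1` elements that contain `v`. -/
theorem fNum_lk (Δ : Finset (Finset V)) (hdc : ∀ σ ∈ Δ, ∀ τ ⊆ σ, τ ∈ Δ) (v : V) (i : ℕ) :
    fNum (lk Δ v) i = (((Δ.filter fun τ => τ.card = i + 1).filter fun τ => v ∈ τ).card : ℤ) := by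
  unfold fNum lk
  congr 1
  refine Finset.card_bij' (fun σ _ => insert v σ) (fun τ _ => τ.erase v) ?_ ?_ ?_ ?_
  · intro σ hσ
    simp only [mem_filter] at hσ ⊢
    obtain ⟨⟨_, hv, hi⟩, hc⟩ := hσ
    exact ⟨⟨hi, by rw [card_insert_of_notMem hv, hc]⟩, mem_insert_self _ _⟩
  · intro τ hτ
    simp only [mem_filter] at hτ ⊢
    obtain ⟨⟨hτ, hc⟩, hv⟩ := hτ
    refine ⟨⟨hdc τ hτ _ (erase_subset _ _), notMem_erase _ _, by rwa [insert_erase hv]⟩, ?_⟩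
    rw [card_erase_of_mem hv, hc, Nat.add_sub_cancel]
  · intro σ hσ
    simp only [mem_filter] at hσ
    exact erase_insert hσ.1.2.1
  · intro τ hτ
    simp only [mem_filter] at hτ
    exact insert_erase hτ.2

/-- Double count of the pairs `(v, τ)` with `v ∈ τ ∈ Δ` and `|τ| = i + 1`. -/
theorem sum_fNum_lk (Δ : Finset (Finset V)) (hdc : ∀ σ ∈ Δ, ∀ τ ⊆ σ, τ ∈ Δ) (i : ℕ) :
    ∑ v ∈ Finset.univ.filter (fun v => ({v} : Finset V) ∈ Δ), fNum (lk Δ v) i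
      = ((i : ℤ) + 1) * fNum Δ (i + 1) := by
  simp only [fNum_lk Δ hdc]
  rw [← Nat.cast_sum]
  have h := Finset.sum_card_bipartiteAbove_eq_sum_card_bipartiteBelow
    (s := Finset.univ.filter (fun v => ({v} : Finset V) ∈ Δ))
    (t := Δ.filter fun τ => τ.card = i + 1) (fun v τ => v ∈ τ)
  unfold bipartiteAbove bipartiteBelow at h
  rw [h]
  have h2 : ∀ τ ∈ Δ.filter (fun τ => τ.card = i + 1),
      ((Finset.univ.filter (fun v => ({v} : Finset V) ∈ Δ)).filter fun v => v ∈ τ).card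
        = i + 1 := by
    intro τ hτ
    rw [mem_filter] at hτ
    rw [← hτ.2]
    congr 1
    ext v
    simp only [mem_filter, mem_univ, true_and, and_iff_right_iff_imp]
    intro hv
    exact hdc τ hτ.1 _ (singleton_subset_iff.mpr hv)
  rw [Finset.sum_congr rfl h2, Finset.sum_const, fNum, smul_eq_mul]
  push_cast
  ring

/-- The integral formula for the `h`-numbers. -/
theorem sum_hNum_lk (Δ : Finset (Finset V)) (hdc : ∀ σ ∈ Δ, ∀ τ ⊆ σ, τ ∈ Δ) (d j : ℕ)
    (hj : j ≤ d) :
    ∑ v ∈ Finset.univ.filter (fun v => ({v} : Finset V) ∈ Δ), hNum (lk Δ v) (d - 1) j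
      = ((j : ℤ) + 1) * hNum Δ d (j + 1) + ((d : ℤ) - j) * hNum Δ d j := by
  unfold hNum
  rw [Finset.sum_comm]
  simp only [← Finset.mul_sum, sum_fNum_lk Δ hdc]
  -- After the shift `m = i + 1`, the left side is a sum over `m ≤ j + 1` whose `m = 0` term is `0`.
  have hL : ∑ i ∈ range (j + 1), (-1 : ℤ) ^ (j - i) * (Nat.choose (d - 1 - i) (j - i) : ℤ)
        * (((i : ℤ) + 1) * fNum Δ (i + 1))
      = ∑ m ∈ range (j + 1 + 1), (-1 : ℤ) ^ (j + 1 - m) * (Nat.choose (d - m) (j + 1 - m) : ℤ)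
        * ((m : ℤ) * fNum Δ m) := by
    rw [Finset.sum_range_succ' _ (j + 1)]
    simp only [Nat.cast_zero, zero_mul, mul_zero, add_zero]
    refine Finset.sum_congr rfl fun i _ => ?_
    rw [Nat.add_sub_add_right, Nat.sub_sub, Nat.add_comm 1 i]
    push_cast
    ring
  rw [hL, Finset.sum_range_succ _ (j + 1), Finset.sum_range_succ _ (j + 1), mul_add,
    Finset.mul_sum, Finset.mul_sum, add_right_comm, ← Finset.sum_add_distrib]
  congr 1
  · refine Finset.sum_congr rfl fun m hm => ?_
    have hm' : m ≤ j := Nat.lt_succ_iff.mp (mem_range.mp hm)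
    obtain ⟨r, rfl⟩ := Nat.exists_eq_add_of_le hm'
    obtain ⟨s, rfl⟩ := Nat.exists_eq_add_of_le hj
    have e1 : m + r + 1 - m = r + 1 := by omega
    have e2 : m + r - m = r := by omega
    have e3 : m + r + s - m = r + s := by omega
    rw [e1, e2, e3]
    have key := Nat.choose_succ_right_eq (r + s) r
    rw [Nat.add_sub_cancel_left] at key
    have key' : (Nat.choose (r + s) (r + 1) : ℤ) * (r + 1) = Nat.choose (r + s) r * s := by
      exact_mod_cast key
    push_cast
    linear_combination (-1 : ℤ) ^ r * fNum Δ m * key'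
  · push_cast
    ring

/-- McMullen's integral formula: for a pure `(d-1)`-dimensional simplicial complex `Δ`
and `0 ≤ k ≤ ⌊(d-1)/2⌋`,
`∑_{v ∈ V(Δ)} g_k(lk(v)) = (k+1) g_{k+1}(Δ) + (d+1-k) g_k(Δ)`. -/
theorem stmt9 (Δ : Finset (Finset V)) (d : ℕ) (hd : 1 ≤ d)
    (hdc : ∀ σ ∈ Δ, ∀ τ ⊆ σ, τ ∈ Δ) (hne : (∅ : Finset V) ∈ Δ)
    (hpure : ∀ σ ∈ Δ, ∃ F ∈ Δ, σ ⊆ F ∧ F.card = d)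
    (k : ℕ) (hk : k ≤ (d - 1) / 2) :
    ∑ v ∈ Finset.univ.filter (fun v => ({v} : Finset V) ∈ Δ), gNum (lk Δ v) (d - 1) k
      = ((k : ℤ) + 1) * gNum Δ d (k + 1) + ((d : ℤ) + 1 - k) * gNum Δ d k := by
  have hkd : k ≤ d := by omega
  unfold gNum
  rw [Finset.sum_sub_distrib, sum_hNum_lk Δ hdc d k hkd]
  rcases k with _ | k
  · simp
    ring
  · simp only [Nat.add_eq_zero_iff, one_ne_zero, and_false, if_false, Nat.add_sub_cancel]
    rw [sum_hNum_lk Δ hdc d k (by omega)]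
    push_cast
    ring
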